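/- Let N ≥ 2 and 0 < R₀ < R₁. Suppose Λ∞ : ℝ → ℝ is a function such that for every s ∈ [0, R₁ − R₀), (λ₁(p, Ω_s))^{1/p} → Λ∞(s) as p → ∞. Then Λ∞ is continuous on [0, R₁ − R₀) and strictly decreasing on [0, R₁ − R₀): for all 0 ≤ s₁ < s₂ < R₁ − R₀ one has Λ∞(s₂) < Λ∞(s₁). -/

import Mathlib

open MeasureTheory Metric Set Filter
open scoped RealInnerProductSpace ENNReal Topology

/-- The first Dirichlet eigenvalue of the p-Laplacian on `Ω`, defined variationally as the
infimum of Rayleigh quotients of smooth, not identically zero functions with compact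
support contained in `Ω`. -/
noncomputable def lam1 {N : ℕ} (p : ℝ) (Ω : Set (EuclideanSpace ℝ (Fin N))) : ℝ :=
  sInf { r : ℝ | ∃ u : EuclideanSpace ℝ (Fin N) → ℝ,
    ContDiff ℝ (⊤ : ℕ∞) u ∧ u ≠ 0 ∧ HasCompactSupport u ∧ tsupport u ⊆ Ω ∧
    r = (∫ x in Ω, ‖gradient u x‖ ^ p) / (∫ x in Ω, |u x| ^ p) }

/-- The first standard basis vector `e₁` of `ℝ^N`. -/
noncomputable def e1 (N : ℕ) : EuclideanSpace ℝ (Fin N) :=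
  (WithLp.equiv 2 (Fin N → ℝ)).symm (fun i => if (i : ℕ) = 0 then 1 else 0)

/-- The eccentric annulus `Ω_s = B_{R₁}(0) \ closure (B_{R₀}(s e₁))`. -/
noncomputable def Om (N : ℕ) (R₀ R₁ s : ℝ) : Set (EuclideanSpace ℝ (Fin N)) :=
  ball 0 R₁ \ closure (ball (s • e1 N) R₀)

/-- `u` is a first eigenfunction of the p-Laplacian on `Ω` with eigenvalue `lam`:
C¹ on an open set containing the closure of `Ω`, positive in `Ω`, zero on `∂Ω`, and a weak
solution of `−Δ_p u = lam · u^{p−1}`. -/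
def IsFirstEigenfunction {N : ℕ} (p : ℝ) (Ω : Set (EuclideanSpace ℝ (Fin N)))
    (lam : ℝ) (u : EuclideanSpace ℝ (Fin N) → ℝ) : Prop :=
  (∃ V : Set (EuclideanSpace ℝ (Fin N)), IsOpen V ∧ closure Ω ⊆ V ∧ ContDiffOn ℝ 1 u V) ∧
  (∀ x ∈ Ω, 0 < u x) ∧
  (∀ x ∈ frontier Ω, u x = 0) ∧
  (∀ φ : EuclideanSpace ℝ (Fin N) → ℝ, ContDiff ℝ (⊤ : ℕ∞) φ → HasCompactSupport φ →
    tsupport φ ⊆ Ω →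
    ∫ x in Ω, ‖gradient u x‖ ^ (p - 2) * ⟪gradient u x, gradient φ x⟫ =
      lam * ∫ x in Ω, (u x) ^ (p - 1) * φ x)

/-!
For a bounded set `Ω` whose complement is contained in the closure of its interior, `λ₁(p, Ω)^{1/p}`
tends to the reciprocal of the inradius of `Ω` as `p → ∞`. From above, one tests with a mollified
distance function, which is 1-Lipschitz and attains values close to the inradius. From below, let
`ρ` exceed the inradius. By compactness, finitely many translations `w₁, …, w_k` of length at most
`ρ` suffice to move every point of `Ω` out of `Ω`, so that `‖u(· + w) - u‖_p ≤ ‖w‖ ‖∇u‖_p` yields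
the Poincaré inequality `‖u‖_p ≤ k^{1/p} ρ ‖∇u‖_p`, and `k` does not depend on `p`.

The largest balls in the annulus `Ω_s` have radius `(R₁ - R₀ + s) / 2`, whence
`Λ∞(s) = 2 / (R₁ - R₀ + s)`.
-/

section Translation

variable {E F : Type*} [NormedAddCommGroup E] [NormedSpace ℝ E] [NormedAddCommGroup F]
  [NormedSpace ℝ F] {u : E → F} {p : ℝ}

lemma rpow_lintegral_le_lintegral_rpow {α : Type*} [MeasurableSpace α] {μ : Measure α}
    [IsProbabilityMeasure μ] {f : α → ℝ≥0∞} (hf : AEMeasurable f μ) (hp : 1 ≤ p) :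
    (∫⁻ x, f x ∂μ) ^ p ≤ ∫⁻ x, f x ^ p ∂μ := by
  have hp₀ : 0 < p := by linarith
  have h := eLpNorm'_le_eLpNorm'_of_exponent_le one_pos hp μ hf.aestronglyMeasurable
  simp only [eLpNorm', enorm_eq_self, ENNReal.rpow_one, div_one] at h
  simpa [ENNReal.rpow_le_rpow_iff, ENNReal.le_rpow_inv_iff hp₀] using h

lemma enorm_add_sub_le_mul_lintegral_fderiv (hu : ContDiff ℝ 1 u) (x w : E) :
    ‖u (x + w) - u x‖ₑ ≤ ‖w‖ₑ * ∫⁻ t in Icc (0 : ℝ) 1, ‖fderiv ℝ u (x + t • w)‖ₑ := by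
  have hderiv (t : ℝ) :
      HasDerivAt (fun t : ℝ ↦ u (x + t • w)) (fderiv ℝ u (x + t • w) w) t := by
    have hline : HasDerivAt (fun t : ℝ ↦ x + t • w) w t := by
      simpa using ((hasDerivAt_id t).smul_const w).const_add x
    exact ((hu.differentiable one_ne_zero) _).hasFDerivAt.comp_hasDerivAt t hline
  calc ‖u (x + w) - u x‖ₑ
      ≤ ∫⁻ t in Icc (0 : ℝ) 1, ‖deriv (fun t : ℝ ↦ u (x + t • w)) t‖ₑ := by
        have hline : ContDiff ℝ 1 fun t : ℝ ↦ u (x + t • w) := hu.comp (by fun_prop)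
        simpa using enorm_sub_le_lintegral_deriv_of_contDiffOn_Icc hline.contDiffOn zero_le_one
    _ ≤ ∫⁻ t in Icc (0 : ℝ) 1, ‖w‖ₑ * ‖fderiv ℝ u (x + t • w)‖ₑ := by
        refine lintegral_mono fun t ↦ ?_
        rw [(hderiv t).deriv, mul_comm]
        exact ContinuousLinearMap.le_opENorm _ _
    _ = ‖w‖ₑ * ∫⁻ t in Icc (0 : ℝ) 1, ‖fderiv ℝ u (x + t • w)‖ₑ :=
        lintegral_const_mul' _ _ enorm_ne_top

variable [MeasurableSpace E] [BorelSpace E] {μ : Measure E} [SFinite μ]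
  [μ.IsAddRightInvariant]

lemma lintegral_lintegral_Icc_translate {f : E → ℝ≥0∞} (hf : Measurable f) (w : E) :
    ∫⁻ x, ∫⁻ t in Icc (0 : ℝ) 1, f (x + t • w) ∂volume ∂μ = ∫⁻ x, f x ∂μ := by
  have hmeas : Measurable fun q : E × ℝ ↦ f (q.1 + q.2 • w) :=
    hf.comp (by fun_prop : Continuous fun q : E × ℝ ↦ q.1 + q.2 • w).measurable
  rw [lintegral_lintegral_swap hmeas.aemeasurable]
  simp only [lintegral_add_right_eq_self, lintegral_const]
  simp

lemma lintegral_rpow_enorm_translate_sub_le (hu : ContDiff ℝ 1 u) (hp : 1 ≤ p) (w : E) :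
    ∫⁻ x, ‖u (x + w) - u x‖ₑ ^ p ∂μ ≤ ‖w‖ₑ ^ p * ∫⁻ x, ‖fderiv ℝ u x‖ₑ ^ p ∂μ := by
  have hp₀ : 0 ≤ p := by linarith
  have hfderiv : Continuous (fderiv ℝ u) := hu.continuous_fderiv one_ne_zero
  have : IsProbabilityMeasure (volume.restrict (Icc (0 : ℝ) 1)) := ⟨by simp⟩
  rw [← lintegral_lintegral_Icc_translate (hfderiv.enorm.measurable.pow_const p) w,
    ← lintegral_const_mul' _ _ (by finiteness)]
  refine lintegral_mono fun x ↦ ?_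
  calc ‖u (x + w) - u x‖ₑ ^ p
      ≤ (‖w‖ₑ * ∫⁻ t in Icc (0 : ℝ) 1, ‖fderiv ℝ u (x + t • w)‖ₑ) ^ p := by
        gcongr
        exact enorm_add_sub_le_mul_lintegral_fderiv hu x w
    _ = ‖w‖ₑ ^ p * (∫⁻ t in Icc (0 : ℝ) 1, ‖fderiv ℝ u (x + t • w)‖ₑ) ^ p :=
        ENNReal.mul_rpow_of_nonneg _ _ hp₀
    _ ≤ ‖w‖ₑ ^ p * ∫⁻ t in Icc (0 : ℝ) 1, ‖fderiv ℝ u (x + t • w)‖ₑ ^ p := by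
        gcongr
        exact rpow_lintegral_le_lintegral_rpow
          (hfderiv.comp (by fun_prop)).enorm.aemeasurable hp

lemma lintegral_rpow_enorm_le_card_mul (hu : ContDiff ℝ 1 u) (hp : 1 ≤ p) {W : Finset E} {ρ : ℝ}
    (hWρ : ∀ w ∈ W, ‖w‖ ≤ ρ) (hW : ∀ x, u x ≠ 0 → ∃ w ∈ W, u (x + w) = 0) :
    ∫⁻ x, ‖u x‖ₑ ^ p ∂μ ≤ W.card * ENNReal.ofReal ρ ^ p * ∫⁻ x, ‖fderiv ℝ u x‖ₑ ^ p ∂μ := by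
  have hp₀ : 0 < p := by linarith
  have hcont : Continuous u := hu.continuous
  calc ∫⁻ x, ‖u x‖ₑ ^ p ∂μ
      ≤ ∫⁻ x, ∑ w ∈ W, ‖u (x + w) - u x‖ₑ ^ p ∂μ := by
        refine lintegral_mono fun x ↦ ?_
        by_cases hx : u x = 0
        · simp [hx, hp₀]
        obtain ⟨w, hw, huw⟩ := hW x hx
        calc ‖u x‖ₑ ^ p = ‖u (x + w) - u x‖ₑ ^ p := by simp [huw]
          _ ≤ _ := Finset.single_le_sum (f := fun w ↦ ‖u (x + w) - u x‖ₑ ^ p)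
            (fun _ _ ↦ zero_le) hw
    _ = ∑ w ∈ W, ∫⁻ x, ‖u (x + w) - u x‖ₑ ^ p ∂μ := lintegral_finsetSum' _ fun _ _ ↦
        ((hcont.comp (by fun_prop)).sub hcont).enorm.aemeasurable.pow_const p
    _ ≤ ∑ _ ∈ W, ENNReal.ofReal ρ ^ p * ∫⁻ x, ‖fderiv ℝ u x‖ₑ ^ p ∂μ := by
        refine Finset.sum_le_sum fun w hw ↦
          (lintegral_rpow_enorm_translate_sub_le hu hp w).trans ?_
        gcongr
        rw [← ofReal_norm]
        exact ENNReal.ofReal_le_ofReal (hWρ w hw)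
    _ = W.card * ENNReal.ofReal ρ ^ p * ∫⁻ x, ‖fderiv ℝ u x‖ₑ ^ p ∂μ := by
        rw [Finset.sum_const, nsmul_eq_mul, mul_assoc]

end Translation

lemma exists_finset_translates_notMem {E : Type*} [NormedAddCommGroup E] [ProperSpace E]
    {Ω : Set E} {ρ : ℝ} (hb : Bornology.IsBounded Ω)
    (hρ : closure Ω ⊆ thickening ρ (interior Ωᶜ)) :
    ∃ W : Finset E, (∀ w ∈ W, ‖w‖ ≤ ρ) ∧ ∀ x ∈ Ω, ∃ w ∈ W, x + w ∉ Ω := by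
  have hcover : closure Ω ⊆ ⋃ w ∈ ball (0 : E) ρ, (· + w) ⁻¹' interior Ωᶜ := fun x hx ↦ by
    obtain ⟨z, hz, hxz⟩ := mem_thickening_iff.1 (hρ hx)
    rw [dist_eq_norm_sub'] at hxz
    exact mem_biUnion (mem_ball_zero_iff.2 hxz) (by simpa using hz)
  obtain ⟨W, hWρ, hWfin, hW⟩ := hb.isCompact_closure.elim_finite_subcover_image
    (fun w _ ↦ isOpen_interior.preimage (continuous_add_const w)) hcover
  refine ⟨hWfin.toFinset, fun w hw ↦ ?_, fun x hx ↦ ?_⟩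
  · exact (mem_ball_zero_iff.1 (hWρ (hWfin.mem_toFinset.1 hw))).le
  · obtain ⟨w, hw, hxw⟩ := mem_iUnion₂.1 (hW (subset_closure hx))
    exact ⟨w, hWfin.mem_toFinset.2 hw, interior_subset hxw⟩

section Mollification

open scoped Convolution

variable {E F : Type*} [NormedAddCommGroup E] [NormedSpace ℝ E] [FiniteDimensional ℝ E]
  [HasContDiffBump E] [NormedAddCommGroup F] [NormedSpace ℝ F] {f : E → F} {K : NNReal}

lemma lipschitzWith_normed_convolution [MeasurableSpace E] [BorelSpace E] {μ : Measure E}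
    [IsLocallyFiniteMeasure μ] [μ.IsOpenPosMeasure] (φ : ContDiffBump (0 : E))
    (hf : LipschitzWith K f) :
    LipschitzWith K (φ.normed μ ⋆[ContinuousLinearMap.lsmul ℝ ℝ, μ] f) := by
  have hint (x : E) : Integrable (fun t ↦ φ.normed μ t • f (x - t)) μ :=
    (φ.continuous_normed.smul (hf.continuous.comp (by fun_prop))).integrable_of_hasCompactSupport
      φ.hasCompactSupport_normed.smul_right
  refine LipschitzWith.of_dist_le_mul fun x y ↦ ?_
  simp only [convolution_def, ContinuousLinearMap.lsmul_apply, dist_eq_norm]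
  rw [← integral_sub (hint x) (hint y)]
  calc ‖∫ t, (φ.normed μ t • f (x - t) - φ.normed μ t • f (y - t)) ∂μ‖
      ≤ ∫ t, φ.normed μ t * (K * ‖x - y‖) ∂μ := by
        refine norm_integral_le_of_norm_le (φ.integrable_normed.mul_const _)
          (ae_of_all _ fun t ↦ ?_)
        rw [← smul_sub, norm_smul, Real.norm_of_nonneg (φ.nonneg_normed t)]
        gcongr
        · exact φ.nonneg_normed t
        · simpa [dist_eq_norm] using hf.dist_le_mul (x - t) (y - t)
    _ = K * ‖x - y‖ := by rw [integral_mul_const, φ.integral_normed, one_mul]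

lemma exists_contDiff_lipschitzWith_dist_le [CompleteSpace F] (hf : LipschitzWith K f) {ε : ℝ}
    (hε : 0 < ε) :
    ∃ g : E → F, ContDiff ℝ (⊤ : ℕ∞) g ∧ LipschitzWith K g ∧ (∀ x, dist (g x) (f x) ≤ K * ε) ∧
      Function.support g ⊆ thickening ε (Function.support f) := by
  borelize E
  let φ : ContDiffBump (0 : E) := ⟨ε / 2, ε, half_pos hε, half_lt_self hε⟩
  let μ : Measure E := Measure.addHaar
  refine ⟨φ.normed μ ⋆[ContinuousLinearMap.lsmul ℝ ℝ, μ] f,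
    φ.hasCompactSupport_normed.contDiff_convolution_left _ φ.contDiff_normed
      hf.continuous.locallyIntegrable,
    lipschitzWith_normed_convolution φ hf, fun x ↦ ?_, ?_⟩
  · exact φ.dist_normed_convolution_le hf.continuous.aestronglyMeasurable fun y hy ↦
      (hf.dist_le_mul y x).trans (by gcongr; exact (mem_ball.1 hy).le)
  · rw [← ball_add_zero, ← φ.support_normed_eq (μ := μ)]
    exact support_convolution_subset _

end Mollification

section CompactSupport

variable {X F : Type*} [TopologicalSpace X] [MeasurableSpace X] [OpensMeasurableSpace X]
  {μ : Measure X} [IsFiniteMeasureOnCompacts μ] [NormedAddCommGroup F] {f : X → F} {p : ℝ}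

lemma integrable_norm_rpow_of_hasCompactSupport (hf : Continuous f) (hc : HasCompactSupport f)
    (hp : 0 < p) : Integrable (fun x ↦ ‖f x‖ ^ p) μ :=
  (hf.norm.rpow_const fun _ ↦ .inr hp.le).integrable_of_hasCompactSupport
    (hc.comp_left (g := fun y ↦ ‖y‖ ^ p) (by simp [hp.ne']))

lemma ofReal_setIntegral_norm_rpow (hf : Continuous f) (hc : HasCompactSupport f) {Ω : Set X}
    (hΩ : tsupport f ⊆ Ω) (hp : 0 < p) :
    ENNReal.ofReal (∫ x in Ω, ‖f x‖ ^ p ∂μ) = ∫⁻ x, ‖f x‖ₑ ^ p ∂μ := by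
  have hzero (x : X) (hx : x ∉ Ω) : ‖f x‖ ^ p = 0 := by
    simp [image_eq_zero_of_notMem_tsupport (fun h ↦ hx (hΩ h)), hp.ne']
  rw [setIntegral_eq_integral_of_forall_compl_eq_zero hzero, ofReal_integral_eq_lintegral_ofReal
    (integrable_norm_rpow_of_hasCompactSupport hf hc hp) (ae_of_all _ fun x ↦ by positivity)]
  simp only [← ENNReal.ofReal_rpow_of_nonneg (norm_nonneg _) hp.le, ofReal_norm]

end CompactSupport

section Inradius

/-- The inradius of `Ω`, i.e. the maximal distance of a point to the complement of `Ω`. It has the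
junk value `0` when `Ω` is the whole space or the distance to the complement is unbounded. -/
noncomputable def inradius {X : Type*} [PseudoMetricSpace X] (Ω : Set X) : ℝ :=
  ⨆ x, infDist x Ωᶜ

variable {X : Type*} [PseudoMetricSpace X] {Ω : Set X}

lemma bddAbove_range_infDist_compl (hb : Bornology.IsBounded Ω) :
    BddAbove (range fun x ↦ infDist x Ωᶜ) := by
  rcases Ωᶜ.eq_empty_or_nonempty with hΩ | ⟨y, hy⟩
  · exact ⟨0, by rintro _ ⟨x, rfl⟩; simp [hΩ]⟩
  obtain ⟨R, hR⟩ := hb.subset_closedBall y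
  refine ⟨max R 0, ?_⟩
  rintro _ ⟨x, rfl⟩
  by_cases hx : x ∈ Ω
  · exact ((infDist_le_dist_of_mem hy).trans (hR hx)).trans (le_max_left _ _)
  · exact (infDist_zero_of_mem hx).trans_le (le_max_right _ _)

lemma infDist_compl_le_inradius (hb : Bornology.IsBounded Ω) (x : X) :
    infDist x Ωᶜ ≤ inradius Ω :=
  le_ciSup (bddAbove_range_infDist_compl hb) x

lemma exists_lt_infDist_compl {a : ℝ} (ha₀ : 0 ≤ a) (ha : a < inradius Ω) :
    ∃ x, a < infDist x Ωᶜ := by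
  by_contra! h
  exact ha.not_ge (Real.iSup_le h ha₀)

lemma closure_subset_thickening_of_inradius_lt (hb : Bornology.IsBounded Ω)
    (hreg : Ωᶜ ⊆ closure (interior Ωᶜ)) (hne : Ωᶜ.Nonempty) {ρ : ℝ} (hρ : inradius Ω < ρ) :
    closure Ω ⊆ thickening ρ (interior Ωᶜ) := fun x _ ↦ by
  rw [← thickening_closure]
  refine thickening_subset_of_subset ρ hreg ?_
  obtain ⟨z, hz, hxz⟩ := (infDist_lt_iff hne).1 ((infDist_compl_le_inradius hb x).trans_lt hρ)
  exact mem_thickening_iff.2 ⟨z, hz, hxz⟩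

end Inradius

section TestFunctions

variable {N : ℕ} {Ω : Set (EuclideanSpace ℝ (Fin N))} {u : EuclideanSpace ℝ (Fin N) → ℝ} {p : ℝ}

/-- `u ∈ C_c^∞(Ω)`: the competitors in the variational definition of `lam1 p Ω`, apart from the
condition `u ≠ 0`. -/
structure IsTestFunction (Ω : Set (EuclideanSpace ℝ (Fin N)))
    (u : EuclideanSpace ℝ (Fin N) → ℝ) : Prop where
  contDiff : ContDiff ℝ (⊤ : ℕ∞) u
  hasCompactSupport : HasCompactSupport u
  tsupport_subset : tsupport u ⊆ Ω

lemma norm_gradient (u : EuclideanSpace ℝ (Fin N) → ℝ) (x : EuclideanSpace ℝ (Fin N)) :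
    ‖gradient u x‖ = ‖fderiv ℝ u x‖ := by
  simp [gradient]

namespace IsTestFunction

lemma eq_zero_of_notMem (hu : IsTestFunction Ω u) {x : EuclideanSpace ℝ (Fin N)} (hx : x ∉ Ω) :
    u x = 0 :=
  image_eq_zero_of_notMem_tsupport fun h ↦ hx (hu.tsupport_subset h)

lemma setOf_lt_subset (hu : IsTestFunction Ω u) {a : ℝ} (ha : 0 ≤ a) : {x | a < u x} ⊆ Ω :=
  fun x hx ↦ by
    by_contra hxΩ
    exact (ha.trans_lt hx).ne' (hu.eq_zero_of_notMem hxΩ)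

lemma integrableOn_abs_rpow (hu : IsTestFunction Ω u) (hp : 0 < p)
    (S : Set (EuclideanSpace ℝ (Fin N))) : IntegrableOn (fun x ↦ |u x| ^ p) S :=
  (integrable_norm_rpow_of_hasCompactSupport hu.contDiff.continuous hu.hasCompactSupport
    hp).integrableOn

lemma ofReal_setIntegral_abs_rpow (hu : IsTestFunction Ω u) (hp : 0 < p) :
    ENNReal.ofReal (∫ x in Ω, |u x| ^ p) = ∫⁻ x, ‖u x‖ₑ ^ p :=
  ofReal_setIntegral_norm_rpow hu.contDiff.continuous hu.hasCompactSupport hu.tsupport_subset hp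

lemma ofReal_setIntegral_norm_gradient_rpow (hu : IsTestFunction Ω u) (hp : 0 < p) :
    ENNReal.ofReal (∫ x in Ω, ‖gradient u x‖ ^ p) = ∫⁻ x, ‖fderiv ℝ u x‖ₑ ^ p := by
  simp only [norm_gradient]
  exact ofReal_setIntegral_norm_rpow (hu.contDiff.continuous_fderiv (by simp))
    (hu.hasCompactSupport.fderiv ℝ) ((tsupport_fderiv_subset ℝ).trans hu.tsupport_subset) hp

lemma setIntegral_abs_rpow_pos (hu : IsTestFunction Ω u) (hne : u ≠ 0) (hp : 0 < p) :
    0 < ∫ x in Ω, |u x| ^ p := by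
  obtain ⟨x, hx⟩ := Function.ne_iff.1 hne
  rw [← ENNReal.ofReal_pos, hu.ofReal_setIntegral_abs_rpow hp]
  have hcont : Continuous fun y ↦ ‖u y‖ₑ ^ p :=
    ENNReal.continuous_rpow_const.comp hu.contDiff.continuous.enorm
  refine (lintegral_pos_iff_support hcont.measurable).2 ?_
  exact hcont.isOpen_support.measure_pos _ ⟨x, by simpa [hp, hp.le, hp.ne'] using hx⟩

lemma mul_rpow_le_setIntegral (hu : IsTestFunction Ω u) {a : ℝ} (ha : 0 ≤ a) (hp : 0 < p) :
    volume.real {x | a < u x} * a ^ p ≤ ∫ x in Ω, |u x| ^ p := by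
  have hfin : volume {x | a < u x} ≠ ∞ :=
    (hu.hasCompactSupport.measure_lt_top.trans_le' (measure_mono fun x hx ↦
      subset_tsupport u (ha.trans_lt hx).ne')).ne
  calc volume.real {x | a < u x} * a ^ p = ∫ _ in {x | a < u x}, a ^ p := by simp
    _ ≤ ∫ x in {x | a < u x}, |u x| ^ p :=
        setIntegral_mono_on (integrableOn_const hfin) (hu.integrableOn_abs_rpow hp _)
          (measurableSet_lt measurable_const hu.contDiff.continuous.measurable) fun x hx ↦
          Real.rpow_le_rpow ha (hx.le.trans (le_abs_self _)) hp.le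
    _ ≤ ∫ x in Ω, |u x| ^ p :=
        setIntegral_mono_set (hu.integrableOn_abs_rpow hp _)
          (ae_of_all _ fun _ ↦ by positivity) (hu.setOf_lt_subset ha).eventuallyLE

lemma lam1_le (hu : IsTestFunction Ω u) (hne : u ≠ 0) :
    lam1 p Ω ≤ (∫ x in Ω, ‖gradient u x‖ ^ p) / ∫ x in Ω, |u x| ^ p := by
  refine csInf_le ⟨0, ?_⟩
    ⟨u, hu.contDiff, hne, hu.hasCompactSupport, hu.tsupport_subset, rfl⟩
  rintro _ ⟨v, -, -, -, -, rfl⟩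
  positivity

end IsTestFunction

lemma exists_isTestFunction_lt (hb : Bornology.IsBounded Ω) {c : EuclideanSpace ℝ (Fin N)}
    {a : ℝ} (ha : a < infDist c Ωᶜ) :
    ∃ u, IsTestFunction Ω u ∧ (∀ x, ‖gradient u x‖ ≤ 1) ∧ a < u c := by
  obtain ⟨ε, hε, hεa⟩ : ∃ ε > 0, a + 3 * ε < infDist c Ωᶜ :=
    ⟨(infDist c Ωᶜ - a) / 4, by linarith, by linarith⟩
  -- Truncating the distance function leaves room for mollification inside `Ω`.
  let f (x : EuclideanSpace ℝ (Fin N)) : ℝ := max (infDist x Ωᶜ - 2 * ε) 0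
  have hf : LipschitzWith 1 f := by
    simpa [f] using ((lipschitz_infDist_pt Ωᶜ).sub (LipschitzWith.const (2 * ε))).max_const 0
  obtain ⟨u, hu, huLip, huf, husupp⟩ := exists_contDiff_lipschitzWith_dist_le hf hε
  have hmargin : tsupport u ⊆ {x | ε ≤ infDist x Ωᶜ} := by
    refine closure_minimal (husupp.trans fun x hx ↦ ?_)
      (isClosed_le continuous_const (continuous_infDist_pt _))
    obtain ⟨y, hy, hxy⟩ := mem_thickening_iff.1 hx
    have hfy : 2 * ε < infDist y Ωᶜ := by
      by_contra! h
      exact hy (max_eq_right (by linarith))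
    have := infDist_le_infDist_add_dist (s := Ωᶜ) (x := y) (y := x)
    rw [dist_comm] at this
    exact (by linarith : ε ≤ infDist x Ωᶜ)
  have hΩ : tsupport u ⊆ Ω := fun x hx ↦ by
    by_contra hxΩ
    exact hε.not_ge ((hmargin hx).trans_eq (infDist_zero_of_mem hxΩ))
  refine ⟨u, ⟨hu, ?_, hΩ⟩, fun x ↦ ?_, ?_⟩
  · exact isCompact_of_isClosed_isBounded (isClosed_tsupport u) (hb.subset hΩ)
  · simpa [norm_gradient] using norm_fderiv_le_of_lipschitz ℝ huLip (x₀ := x)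
  · have h₁ : infDist c Ωᶜ - 2 * ε ≤ f c := le_max_left _ _
    have h₂ := (abs_le.1 ((Real.dist_eq _ _).symm.trans_le (huf c))).1
    rw [NNReal.coe_one] at h₂
    linarith

end TestFunctions

section EigenvalueBounds

variable {N : ℕ} {Ω : Set (EuclideanSpace ℝ (Fin N))}

lemma exists_setIntegral_abs_rpow_le (hb : Bornology.IsBounded Ω) {ρ : ℝ} (hρ₀ : 0 ≤ ρ)
    (hρ : closure Ω ⊆ thickening ρ (interior Ωᶜ)) :
    ∃ k : ℕ, ∀ p : ℝ, 1 ≤ p → ∀ u, IsTestFunction Ω u →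
      ∫ x in Ω, |u x| ^ p ≤ k * ρ ^ p * ∫ x in Ω, ‖gradient u x‖ ^ p := by
  obtain ⟨W, hWρ, hW⟩ := exists_finset_translates_notMem hb hρ
  refine ⟨W.card, fun p hp u hu ↦ ?_⟩
  have hp₀ : 0 < p := by linarith
  have hvanish (x : EuclideanSpace ℝ (Fin N)) (hx : u x ≠ 0) : ∃ w ∈ W, u (x + w) = 0 := by
    obtain ⟨w, hw, hxw⟩ := hW x (not_imp_comm.1 hu.eq_zero_of_notMem hx)
    exact ⟨w, hw, hu.eq_zero_of_notMem hxw⟩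
  rw [← ENNReal.ofReal_le_ofReal_iff (by positivity), ENNReal.ofReal_mul (by positivity),
    ENNReal.ofReal_mul (by positivity), ENNReal.ofReal_natCast,
    ← ENNReal.ofReal_rpow_of_nonneg hρ₀ hp₀.le, hu.ofReal_setIntegral_abs_rpow hp₀,
    hu.ofReal_setIntegral_norm_gradient_rpow hp₀]
  exact lintegral_rpow_enorm_le_card_mul (hu.contDiff.of_le (by simp)) hp hWρ hvanish

lemma lam1_nonneg (p : ℝ) (Ω : Set (EuclideanSpace ℝ (Fin N))) : 0 ≤ lam1 p Ω := by
  refine Real.sInf_nonneg ?_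
  rintro _ ⟨u, -, -, -, -, rfl⟩
  positivity

lemma exists_mul_rpow_le_lam1 (hb : Bornology.IsBounded Ω) {c : EuclideanSpace ℝ (Fin N)}
    (hc : 0 < infDist c Ωᶜ) {ρ : ℝ} (hρ₀ : 0 < ρ)
    (hρ : closure Ω ⊆ thickening ρ (interior Ωᶜ)) :
    ∃ C > 0, ∀ p : ℝ, 1 ≤ p → C * ρ⁻¹ ^ p ≤ lam1 p Ω := by
  obtain ⟨k, hk⟩ := exists_setIntegral_abs_rpow_le hb hρ₀.le hρ
  refine ⟨(k + 1 : ℝ)⁻¹, by positivity, fun p hp ↦ le_csInf ?_ ?_⟩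
  · obtain ⟨u, hu, -, huc⟩ := exists_isTestFunction_lt hb hc
    exact ⟨_, u, hu.contDiff, fun h ↦ huc.ne' (congrFun h c), hu.hasCompactSupport,
      hu.tsupport_subset, rfl⟩
  · rintro _ ⟨u, hdiff, hne, hcs, hts, rfl⟩
    have hu : IsTestFunction Ω u := ⟨hdiff, hcs, hts⟩
    rw [le_div_iff₀ (hu.setIntegral_abs_rpow_pos hne (by linarith)), Real.inv_rpow hρ₀.le,
      ← mul_inv, inv_mul_le_iff₀ (by positivity)]
    exact (hk p hp u hu).trans (by gcongr; linarith)

lemma exists_lam1_le_mul_rpow (hb : Bornology.IsBounded Ω) {c : EuclideanSpace ℝ (Fin N)}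
    {a : ℝ} (ha₀ : 0 < a) (ha : a < infDist c Ωᶜ) :
    ∃ C > 0, ∀ p : ℝ, 0 < p → lam1 p Ω ≤ C * a⁻¹ ^ p := by
  obtain ⟨u, hu, hgrad, huc⟩ := exists_isTestFunction_lt hb ha
  have hne : u ≠ 0 := fun h ↦ (ha₀.trans huc).ne' (congrFun h c)
  have hsub : {x | a < u x} ⊆ Ω := hu.setOf_lt_subset ha₀.le
  have hpos : 0 < volume.real {x | a < u x} := ENNReal.toReal_pos
    ((isOpen_lt continuous_const hu.contDiff.continuous).measure_pos volume ⟨c, huc⟩).ne'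
    (hb.subset hsub).measure_lt_top.ne
  have hΩ : 0 < volume.real Ω := hpos.trans_le (measureReal_mono hsub hb.measure_lt_top.ne)
  refine ⟨volume.real Ω / volume.real {x | a < u x}, by positivity, fun p hp ↦ ?_⟩
  have hnum : ∫ x in Ω, ‖gradient u x‖ ^ p ≤ volume.real Ω := by
    have hle (x : EuclideanSpace ℝ (Fin N)) : ‖‖gradient u x‖ ^ p‖ ≤ 1 := by
      rw [Real.norm_of_nonneg (by positivity)]
      exact Real.rpow_le_one (norm_nonneg _) (hgrad x) hp.le
    simpa using (le_abs_self _).trans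
      (norm_setIntegral_le_of_norm_le_const hb.measure_lt_top fun x _ ↦ hle x)
  calc lam1 p Ω ≤ (∫ x in Ω, ‖gradient u x‖ ^ p) / ∫ x in Ω, |u x| ^ p := hu.lam1_le hne
    _ ≤ volume.real Ω / (volume.real {x | a < u x} * a ^ p) :=
        div_le_div₀ hΩ.le hnum (by positivity) (hu.mul_rpow_le_setIntegral ha₀.le hp)
    _ = volume.real Ω / volume.real {x | a < u x} * a⁻¹ ^ p := by
        rw [Real.inv_rpow ha₀.le, div_mul_eq_div_mul_one_div, one_div]

end EigenvalueBounds

section Limit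

lemma tendsto_mul_rpow_rpow_one_div {C a : ℝ} (hC : 0 < C) (ha : 0 ≤ a) :
    Tendsto (fun p : ℝ ↦ (C * a ^ p) ^ (1 / p)) atTop (𝓝 a) := by
  have hroot : Tendsto (fun p : ℝ ↦ C ^ p⁻¹) atTop (𝓝 1) := by
    simpa [Function.comp_def] using
      ((Real.continuous_const_rpow hC.ne').tendsto 0).comp tendsto_inv_atTop_zero
  have hprod : Tendsto (fun p : ℝ ↦ C ^ p⁻¹ * a) atTop (𝓝 a) := by
    simpa using hroot.mul_const a
  refine hprod.congr' ?_
  filter_upwards [eventually_gt_atTop 0] with p hp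
  rw [one_div, Real.mul_rpow hC.le (by positivity), Real.rpow_rpow_inv ha hp.ne']

theorem tendsto_lam1_rpow_inv_inradius {N : ℕ} {Ω : Set (EuclideanSpace ℝ (Fin N))}
    (hb : Bornology.IsBounded Ω) (hreg : Ωᶜ ⊆ closure (interior Ωᶜ)) (hpos : 0 < inradius Ω) :
    Tendsto (fun p : ℝ ↦ lam1 p Ω ^ (1 / p)) atTop (𝓝 (inradius Ω)⁻¹) := by
  obtain ⟨c, hc⟩ := exists_lt_infDist_compl le_rfl hpos
  have hne : Ωᶜ.Nonempty := nonempty_iff_ne_empty.2 fun h ↦ by simp [h] at hc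
  have hinv : Tendsto (·⁻¹) (𝓝 (inradius Ω)) (𝓝 (inradius Ω)⁻¹) := tendsto_inv₀ hpos.ne'
  refine tendsto_order.2 ⟨fun b hb' ↦ ?_, fun b hb' ↦ ?_⟩
  · obtain ⟨ρ, hρb, hρ⟩ : ∃ ρ, b < ρ⁻¹ ∧ inradius Ω < ρ :=
      (((hinv.eventually_const_lt hb').filter_mono nhdsWithin_le_nhds).and
        self_mem_nhdsWithin).exists (f := 𝓝[>] _)
    have hρ₀ : 0 < ρ := hpos.trans hρ
    obtain ⟨C, hC, hle⟩ := exists_mul_rpow_le_lam1 hb hc hρ₀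
      (closure_subset_thickening_of_inradius_lt hb hreg hne hρ)
    filter_upwards [eventually_ge_atTop 1,
      (tendsto_mul_rpow_rpow_one_div hC (inv_nonneg.2 hρ₀.le)).eventually_const_lt hρb]
      with p hp hlt
    exact hlt.trans_le (Real.rpow_le_rpow (by positivity) (hle p hp) (by positivity))
  · obtain ⟨a, hab, ha₀, ha⟩ : ∃ a, a⁻¹ < b ∧ a ∈ Ioo 0 (inradius Ω) :=
      (((hinv.eventually_lt_const hb').filter_mono nhdsWithin_le_nhds).and
        (Ioo_mem_nhdsLT hpos)).exists
    obtain ⟨x, hx⟩ := exists_lt_infDist_compl ha₀.le ha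
    obtain ⟨C, hC, hle⟩ := exists_lam1_le_mul_rpow hb ha₀ hx
    filter_upwards [eventually_gt_atTop 0,
      (tendsto_mul_rpow_rpow_one_div hC (inv_nonneg.2 ha₀.le)).eventually_lt_const hab]
      with p hp hlt
    exact (Real.rpow_le_rpow (lam1_nonneg p Ω) (hle p hp) (by positivity)).trans_lt hlt

end Limit

section Annulus

variable {E : Type*} [NormedAddCommGroup E] [NormedSpace ℝ E] [Nontrivial E] {a : E} {R₀ R₁ : ℝ}

lemma exists_norm_eq_one_norm_smul_eq (x : E) : ∃ v : E, ‖v‖ = 1 ∧ ‖x‖ • v = x := by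
  rcases eq_or_ne x 0 with rfl | hx
  · obtain ⟨v, hv⟩ := exists_norm_eq E zero_le_one
    exact ⟨v, hv, by simp⟩
  · exact ⟨‖x‖⁻¹ • x, by simpa using norm_smul_inv_norm (𝕜 := ℝ) hx,
      smul_inv_smul₀ (norm_ne_zero_iff.2 hx) x⟩

lemma infDist_compl_ball_zero_le {x : E} {R : ℝ} (hx : ‖x‖ ≤ R) :
    infDist x (ball (0 : E) R)ᶜ ≤ R - ‖x‖ := by
  obtain ⟨v, hv, hxv⟩ := exists_norm_eq_one_norm_smul_eq x
  have hR : 0 ≤ R := (norm_nonneg x).trans hx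
  refine (infDist_le_dist_of_mem (y := R • v) ?_).trans_eq ?_
  · simp [norm_smul, hv, abs_of_nonneg hR]
  · calc dist x (R • v) = ‖(‖x‖ - R) • v‖ := by rw [dist_eq_norm, sub_smul, hxv]
      _ = R - ‖x‖ := by
        rw [norm_smul, hv, mul_one, Real.norm_of_nonpos (by linarith), neg_sub]

lemma compl_ball_diff_closure_ball_subset (x a : E) (R₀ R₁ : ℝ) :
    (ball x R₁ \ closure (ball a R₀))ᶜ ⊆
      closure (interior (ball x R₁ \ closure (ball a R₀))ᶜ) := by
  rw [compl_sdiff, union_comm]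
  refine union_subset ?_ ?_
  · rw [← interior_closedBall', interior_eq_compl_closure_compl, compl_compl]
    exact closure_mono (interior_maximal (subset_closure.trans subset_union_left)
      isClosed_closedBall.isOpen_compl)
  · exact closure_mono (interior_maximal (subset_closure.trans subset_union_right) isOpen_ball)

lemma infDist_compl_annulus_le (hR₀ : 0 ≤ R₀) (ha : ‖a‖ + R₀ ≤ R₁) (x : E) :
    infDist x (ball 0 R₁ \ closedBall a R₀)ᶜ ≤ (R₁ - R₀ + ‖a‖) / 2 := by
  have ha₀ : 0 ≤ ‖a‖ := norm_nonneg a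
  by_cases hx : x ∈ ball 0 R₁ \ closedBall a R₀
  swap
  · exact (infDist_zero_of_mem hx).trans_le (by linarith)
  have hxR : ‖x‖ < R₁ := mem_ball_zero_iff.1 hx.1
  rcases le_or_gt (R₁ - ‖x‖) ((R₁ - R₀ + ‖a‖) / 2) with houter | hinner
  · obtain ⟨y, hy⟩ := exists_norm_eq E (show 0 ≤ R₁ by linarith)
    have hne : (ball (0 : E) R₁)ᶜ.Nonempty := ⟨y, by simp [hy]⟩
    exact (infDist_le_infDist_of_subset (compl_subset_compl.2 sdiff_subset) hne).trans
      ((infDist_compl_ball_zero_le hxR.le).trans houter)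
  · have hxa : dist x a ≤ R₀ + (R₁ - R₀ + ‖a‖) / 2 := by
      have := dist_eq_norm x a ▸ norm_sub_le x a
      linarith
    obtain ⟨y, hxy, hya⟩ := exists_dist_le_le (by linarith) hR₀ hxa
    exact (infDist_le_dist_of_mem fun hy ↦ hy.2 hya).trans hxy

lemma exists_le_infDist_compl_annulus (hR₀ : 0 ≤ R₀) (ha : ‖a‖ + R₀ ≤ R₁) :
    ∃ c, (R₁ - R₀ + ‖a‖) / 2 ≤ infDist c (ball 0 R₁ \ closedBall a R₀)ᶜ := by
  have ha₀ : 0 ≤ ‖a‖ := norm_nonneg a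
  obtain ⟨v, hv, hav⟩ := exists_norm_eq_one_norm_smul_eq a
  -- The largest ball spans the gap between the hole and the outer sphere, opposite to `a`.
  refine ⟨((‖a‖ - R₀ - R₁) / 2) • v, (le_infDist ⟨a, fun h ↦ h.2 (mem_closedBall_self hR₀)⟩).2 ?_⟩
  intro y hy
  rw [compl_sdiff] at hy
  rcases hy with hya | hyR
  · have hca : dist (((‖a‖ - R₀ - R₁) / 2) • v) a = (R₁ + R₀ + ‖a‖) / 2 := by
      nth_rw 2 [← hav]
      rw [dist_eq_norm, ← sub_smul, norm_smul, hv, Real.norm_of_nonpos (by linarith)]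
      ring
    have := dist_triangle (((‖a‖ - R₀ - R₁) / 2) • v) y a
    linarith [mem_closedBall.1 hya]
  · have hc : ‖((‖a‖ - R₀ - R₁) / 2) • v‖ = (R₁ + R₀ - ‖a‖) / 2 := by
      rw [norm_smul, hv, Real.norm_of_nonpos (by linarith)]
      ring
    have hy : R₁ ≤ ‖y‖ := by simpa using hyR
    have := norm_sub_norm_le y (((‖a‖ - R₀ - R₁) / 2) • v)
    rw [dist_comm, dist_eq_norm]
    linarith

theorem inradius_ball_diff_closedBall (hR₀ : 0 ≤ R₀) (ha : ‖a‖ + R₀ ≤ R₁) :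
    inradius (ball 0 R₁ \ closedBall a R₀) = (R₁ - R₀ + ‖a‖) / 2 := by
  obtain ⟨c, hc⟩ := exists_le_infDist_compl_annulus hR₀ ha
  exact le_antisymm (ciSup_le (infDist_compl_annulus_le hR₀ ha))
    (hc.trans (infDist_compl_le_inradius (isBounded_ball.subset sdiff_subset) c))

end Annulus

lemma norm_e1 {N : ℕ} (hN : N ≠ 0) : ‖e1 N‖ = 1 := by
  have : e1 N = EuclideanSpace.single ⟨0, Nat.pos_of_ne_zero hN⟩ (1 : ℝ) := by
    ext i
    simp [e1, Fin.ext_iff]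
  simp [this]

theorem tendsto_lam1_Om_rpow_inv {N : ℕ} (hN : N ≠ 0) {R₀ R₁ s : ℝ} (hR₀ : 0 < R₀)
    (hs : s ∈ Ico 0 (R₁ - R₀)) :
    Tendsto (fun p : ℝ ↦ lam1 p (Om N R₀ R₁ s) ^ (1 / p)) atTop
      (𝓝 ((R₁ - R₀ + s) / 2)⁻¹) := by
  have : NeZero N := ⟨hN⟩
  obtain ⟨hs₀, hs₁⟩ := hs
  have hnorm : ‖s • e1 N‖ = s := by rw [norm_smul, norm_e1 hN, mul_one, Real.norm_of_nonneg hs₀]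
  have hinradius : inradius (Om N R₀ R₁ s) = (R₁ - R₀ + s) / 2 := by
    rw [Om, closure_ball _ hR₀.ne', inradius_ball_diff_closedBall hR₀.le (by linarith), hnorm]
  rw [← hinradius]
  exact tendsto_lam1_rpow_inv_inradius (isBounded_ball.subset sdiff_subset)
    (compl_ball_diff_closure_ball_subset _ _ _ _) (by rw [hinradius]; linarith)

theorem stmt4_general {N : ℕ} (hN : N ≠ 0) {R₀ R₁ : ℝ} (hR₀ : 0 < R₀) {Λ : ℝ → ℝ}
    (hΛ : ∀ s ∈ Set.Ico 0 (R₁ - R₀),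
      Tendsto (fun p : ℝ ↦ (lam1 p (Om N R₀ R₁ s)) ^ (1 / p)) atTop (nhds (Λ s))) :
    ContinuousOn Λ (Set.Ico 0 (R₁ - R₀)) ∧ StrictAntiOn Λ (Set.Ico 0 (R₁ - R₀)) := by
  have hformula : EqOn Λ (fun s ↦ ((R₁ - R₀ + s) / 2)⁻¹) (Ico 0 (R₁ - R₀)) := fun s hs ↦
    tendsto_nhds_unique (hΛ s hs) (tendsto_lam1_Om_rpow_inv hN hR₀ hs)
  have hpos (s : ℝ) (hs : s ∈ Ico 0 (R₁ - R₀)) : 0 < (R₁ - R₀ + s) / 2 := by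
    linarith [hs.1, hs.2]
  refine ⟨ContinuousOn.congr ?_ hformula, StrictAntiOn.congr ?_ hformula.symm⟩
  · exact ContinuousOn.inv₀ (by fun_prop) fun s hs ↦ (hpos s hs).ne'
  · exact fun s hs t _ hst ↦ inv_strictAnti₀ (hpos s hs) (by linarith)

theorem stmt4 (N : ℕ) (hN : 2 ≤ N) (R₀ R₁ : ℝ) (hR₀ : 0 < R₀) (hR : R₀ < R₁)
    (Λ : ℝ → ℝ)
    (hΛ : ∀ s ∈ Set.Ico 0 (R₁ - R₀),
      Tendsto (fun p : ℝ => (lam1 p (Om N R₀ R₁ s)) ^ (1 / p)) atTop (nhds (Λ s))) :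
    ContinuousOn Λ (Set.Ico 0 (R₁ - R₀)) ∧ StrictAntiOn Λ (Set.Ico 0 (R₁ - R₀)) :=
  stmt4_general (by lia) hR₀ hΛ
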